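/- Let u : ℝ × ℝ → ℝ be smooth with u(t,x) ≠ 0 for all (t,x) and satisfying u_t = u²·(1 + u_xx) at every point. Let f, g : ℝ × ℝ → ℝ be smooth functions such that: (i) f_t = u²·f_xx + 2u·(1 + u_xx)·f at every point (f is a symmetry characteristic of u_t = u²(1 + u_xx)), (ii) g_x = f/u² at every point, and (iii) g_t = f_x at every point. Then the function h(t,x) := u·f_x + (x/2)·f + u²·(1 + u_xx)·g satisfies h_t = u²·h_xx + 2u·(1 + u_xx)·h at every point; that is, h is again a symmetry characteristic. -/

import Mathlib

/-- Partial derivative with respect to the first (time) variable. -/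
noncomputable def dt (u : ℝ → ℝ → ℝ) (t x : ℝ) : ℝ := deriv (fun s => u s x) t

/-- `n`-th partial derivative with respect to the second (space) variable. -/
noncomputable def dx (u : ℝ → ℝ → ℝ) (n : ℕ) (t x : ℝ) : ℝ := iteratedDeriv n (u t) x

/-- Joint smoothness. -/
def Sm (F : ℝ → ℝ → ℝ) : Prop := ContDiff ℝ (⊤ : ℕ∞) fun p : ℝ × ℝ => F p.1 p.2

/-- First space derivative. -/
noncomputable def Dx (F : ℝ → ℝ → ℝ) (t x : ℝ) : ℝ := deriv (F t) x

theorem Sm.hasX {F : ℝ → ℝ → ℝ} (hF : Sm F) (t x : ℝ) :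
    HasDerivAt (F t) (fderiv ℝ (fun p : ℝ × ℝ => F p.1 p.2) (t, x) (0, 1)) x := by
  have h1 : HasFDerivAt (fun p : ℝ × ℝ => F p.1 p.2) _ (t, x) :=
    (ContDiff.differentiable hF (by simp) (t, x)).hasFDerivAt
  have h2 : HasDerivAt (fun y : ℝ => (t, y)) ((0 : ℝ), (1 : ℝ)) x :=
    (hasDerivAt_const x t).prodMk (hasDerivAt_id x)
  exact h1.comp_hasDerivAt x h2

theorem Sm.hasT {F : ℝ → ℝ → ℝ} (hF : Sm F) (t x : ℝ) :
    HasDerivAt (fun s => F s x) (fderiv ℝ (fun p : ℝ × ℝ => F p.1 p.2) (t, x) (1, 0)) t := by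
  have h1 : HasFDerivAt (fun p : ℝ × ℝ => F p.1 p.2) _ (t, x) :=
    (ContDiff.differentiable hF (by simp) (t, x)).hasFDerivAt
  have h2 : HasDerivAt (fun s : ℝ => (s, x)) ((1 : ℝ), (0 : ℝ)) t :=
    (hasDerivAt_id t).prodMk (hasDerivAt_const t x)
  exact h1.comp_hasDerivAt t h2

theorem Sm.Dx_eq {F : ℝ → ℝ → ℝ} (hF : Sm F) (t x : ℝ) :
    Dx F t x = fderiv ℝ (fun p : ℝ × ℝ => F p.1 p.2) (t, x) (0, 1) := (hF.hasX t x).deriv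

theorem Sm.dt_eq {F : ℝ → ℝ → ℝ} (hF : Sm F) (t x : ℝ) :
    dt F t x = fderiv ℝ (fun p : ℝ × ℝ => F p.1 p.2) (t, x) (1, 0) := (hF.hasT t x).deriv

theorem Sm.dX {F : ℝ → ℝ → ℝ} (hF : Sm F) (t x : ℝ) : HasDerivAt (F t) (Dx F t x) x := by
  rw [hF.Dx_eq]; exact hF.hasX t x

theorem Sm.dT {F : ℝ → ℝ → ℝ} (hF : Sm F) (t x : ℝ) :
    HasDerivAt (fun s => F s x) (dt F t x) t := by
  rw [hF.dt_eq]; exact hF.hasT t x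

theorem Sm.fd {F : ℝ → ℝ → ℝ} (hF : Sm F) :
    ContDiff ℝ (⊤ : ℕ∞) (fderiv ℝ (fun p : ℝ × ℝ => F p.1 p.2)) :=
  ContDiff.fderiv_right hF (by simp)

theorem Sm.smX {F : ℝ → ℝ → ℝ} (hF : Sm F) : Sm (Dx F) := by
  unfold Sm
  simp only [hF.Dx_eq]
  exact hF.fd.clm_apply contDiff_const

theorem Sm.smT {F : ℝ → ℝ → ℝ} (hF : Sm F) : Sm (dt F) := by
  unfold Sm
  simp only [hF.dt_eq]
  exact hF.fd.clm_apply contDiff_const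

theorem Sm.comm {F : ℝ → ℝ → ℝ} (hF : Sm F) : dt (Dx F) = Dx (dt F) := by
  funext t x
  have hd := (hF.fd.differentiable (by simp) (t, x)).hasFDerivAt
  rw [hF.smX.dt_eq, hF.smT.Dx_eq]
  simp only [hF.dt_eq, hF.Dx_eq]
  have e (v w : ℝ × ℝ) :
      fderiv ℝ (fun p : ℝ × ℝ => fderiv ℝ (fun p : ℝ × ℝ => F p.1 p.2) (p.1, p.2) v) (t, x) w
      = fderiv ℝ (fderiv ℝ (fun p : ℝ × ℝ => F p.1 p.2)) (t, x) w v := by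
    have := (hd.clm_apply (hasFDerivAt_const v (t, x))).fderiv
    simp only [Prod.mk.eta]
    rw [this]; simp
  rw [e, e]
  have hs : IsSymmSndFDerivAt ℝ (fun p : ℝ × ℝ => F p.1 p.2) (t, x) :=
    (ContDiff.contDiffAt hF).isSymmSndFDerivAt (by
      simp only [minSmoothness_of_isRCLikeNormedField]
      exact WithTop.coe_le_coe.2 (le_top : (2 : ℕ∞) ≤ ⊤))
  exact hs.eq _ _

theorem dx_one (F : ℝ → ℝ → ℝ) : dx F 1 = Dx F := by
  funext t x; simp [dx, Dx]

theorem dx_two (F : ℝ → ℝ → ℝ) : dx F 2 = Dx (Dx F) := by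
  funext t x
  simp only [dx, Dx, iteratedDeriv_succ, iteratedDeriv_zero]
  rfl

theorem stmt_11 (u : ℝ → ℝ → ℝ) (hu : ContDiff ℝ (⊤ : ℕ∞) fun p : ℝ × ℝ => u p.1 p.2)
    (hne : ∀ t x, u t x ≠ 0)
    (hueq : ∀ t x, dt u t x = (u t x) ^ 2 * (1 + dx u 2 t x))
    (f g : ℝ → ℝ → ℝ)
    (hf : ContDiff ℝ (⊤ : ℕ∞) fun p : ℝ × ℝ => f p.1 p.2)
    (hg : ContDiff ℝ (⊤ : ℕ∞) fun p : ℝ × ℝ => g p.1 p.2)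
    (hfeq : ∀ t x, dt f t x =
      (u t x) ^ 2 * dx f 2 t x + 2 * u t x * (1 + dx u 2 t x) * f t x)
    (hgx : ∀ t x, dx g 1 t x = f t x / (u t x) ^ 2)
    (hgt : ∀ t x, dt g t x = dx f 1 t x)
    (h : ℝ → ℝ → ℝ)
    (hh : ∀ t x, h t x = u t x * dx f 1 t x + (x / 2) * f t x
      + (u t x) ^ 2 * (1 + dx u 2 t x) * g t x) :
    ∀ t x, dt h t x = (u t x) ^ 2 * dx h 2 t x + 2 * u t x * (1 + dx u 2 t x) * h t x := by
  change Sm u at hu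
  change Sm f at hf
  change Sm g at hg
  simp only [dx_one, dx_two] at *
  have hw : Sm (dt u) := hu.smT
  have hu2 := hu.smX.smX
  have hf1 := hf.smX
  have hf2 := hf1.smX
  have hh' : ∀ t x, h t x = u t x * Dx f t x + (x / 2) * f t x + dt u t x * g t x := by
    intro t x; rw [hh, hueq]
  -- derivatives of w
  have hw1 : ∀ t x, Dx (dt u) t x = 2 * u t x * Dx u t x * (1 + Dx (Dx u) t x)
      + u t x ^ 2 * Dx (Dx (Dx u)) t x := by
    intro t x
    have e : dt u t = fun x => u t x ^ 2 * (1 + Dx (Dx u) t x) := funext (hueq t)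
    have := ((hu.dX t x).fun_pow 2).fun_mul ((hu2.dX t x).const_add 1)
    rw [Dx, e, this.deriv]; push_cast; ring
  have hwt : ∀ t x, dt (dt u) t x = 2 * u t x * dt u t x * (1 + Dx (Dx u) t x)
      + u t x ^ 2 * Dx (Dx (dt u)) t x := by
    intro t x
    have e : (fun s => dt u s x) = fun s => u s x ^ 2 * (1 + Dx (Dx u) s x) :=
      funext fun s => hueq s x
    have := ((hu.dT t x).fun_pow 2).fun_mul ((hu2.dT t x).const_add 1)
    rw [← hu.comm, ← hu.smX.comm]
    rw [dt, e, this.deriv]; push_cast; ring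
  -- time derivative of f_x
  have hf1t : ∀ t x, dt (Dx f) t x = 2 * u t x * Dx u t x * Dx (Dx f) t x
      + u t x ^ 2 * Dx (Dx (Dx f)) t x + 2 * Dx u t x * (1 + Dx (Dx u) t x) * f t x
      + 2 * u t x * Dx (Dx (Dx u)) t x * f t x
      + 2 * u t x * (1 + Dx (Dx u) t x) * Dx f t x := by
    intro t x
    have e : dt f t = fun x => u t x ^ 2 * Dx (Dx f) t x
      + 2 * u t x * (1 + Dx (Dx u) t x) * f t x := funext (hfeq t)
    have := (((hu.dX t x).fun_pow 2).fun_mul (hf2.dX t x)).fun_add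
      ((((hu.dX t x).const_mul 2).fun_mul ((hu2.dX t x).const_add 1)).fun_mul (hf.dX t x))
    rw [hf.comm, Dx, e, this.deriv]; push_cast; ring
  have hgxx : ∀ t x, u t x ^ 2 * Dx (Dx g) t x = Dx f t x - 2 * u t x * Dx u t x * Dx g t x := by
    intro t x
    have e : f t = fun x => u t x ^ 2 * Dx g t x := by
      funext x; rw [hgx]; field_simp [hne t x]
    have := ((hu.dX t x).fun_pow 2).fun_mul (hg.smX.dX t x)
    have e2 := this.deriv
    rw [← e] at e2
    rw [show Dx f t x = deriv (f t) x from rfl, e2]; push_cast; ring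
  have hht : ∀ t x, dt h t x = dt u t x * Dx f t x + u t x * dt (Dx f) t x + x / 2 * dt f t x
      + dt (dt u) t x * g t x + dt u t x * dt g t x := by
    intro t x
    have e : (fun s => h s x) = _ := funext fun s => hh' s x
    have := (((hu.dT t x).fun_mul (hf1.dT t x)).fun_add ((hf.dT t x).const_mul (x / 2))).fun_add
      ((hw.dT t x).fun_mul (hg.dT t x))
    rw [dt, e, this.deriv]; ring
  have hhx : Dx h = fun t x => Dx u t x * Dx f t x + u t x * Dx (Dx f) t x + 1 / 2 * f t x
      + x / 2 * Dx f t x + Dx (dt u) t x * g t x + dt u t x * Dx g t x := by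
    funext t x
    have e : h t = _ := funext (hh' t)
    have := (((hu.dX t x).fun_mul (hf1.dX t x)).fun_add
      (((hasDerivAt_id' x).div_const 2).fun_mul (hf.dX t x))).fun_add
      ((hw.dX t x).fun_mul (hg.dX t x))
    rw [Dx, e, this.deriv]; ring
  have hhxx : ∀ t x, Dx (Dx h) t x = Dx (Dx u) t x * Dx f t x + 2 * Dx u t x * Dx (Dx f) t x
      + u t x * Dx (Dx (Dx f)) t x + Dx f t x + x / 2 * Dx (Dx f) t x
      + Dx (Dx (dt u)) t x * g t x + 2 * Dx (dt u) t x * Dx g t x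
      + dt u t x * Dx (Dx g) t x := by
    intro t x
    have := (((((((hu.smX.dX t x).fun_mul (hf1.dX t x)).fun_add
      ((hu.dX t x).fun_mul (hf2.dX t x))).fun_add ((hf.dX t x).const_mul (1 / 2))).fun_add
      (((hasDerivAt_id' x).div_const 2).fun_mul (hf1.dX t x))).fun_add
      ((hw.smX.dX t x).fun_mul (hg.dX t x))).fun_add ((hw.dX t x).fun_mul (hg.smX.dX t x)))
    rw [hhx, Dx, this.deriv]; ring
  intro t x
  have hfg : f t x = u t x ^ 2 * Dx g t x := by rw [hgx]; field_simp [hne t x]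
  have k := hgxx t x
  rw [hht, hhxx, hh', hwt, hf1t, hgt, hfeq, hw1]
  rw [hfg]
  have hU := hueq t x
  rw [hU]
  linear_combination (-(u t x ^ 2 * (1 + Dx (Dx u) t x))) * k
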